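/- Let X ∈ ℝ^{m×n}, let 0 ≤ ε₁ < 1 and 0 ≤ ε₂ < 1, let Ω₁ ∈ ℝ^{s₁×m} be an ε₁-subspace embedding for the column space of X, and let Ω₂ ∈ ℝ^{s₂×s₁} be an ε₂-subspace embedding for the column space of Ω₁X. Set ε_s = ε₁ + ε₂ − ε₁ε₂ and ε_b = ε₁ + ε₂ + ε₁ε₂. Then the spectral norms satisfy √(1−ε_s)·‖X‖₂ ≤ ‖Ω₂Ω₁X‖₂ ≤ √(1+ε_b)·‖X‖₂. -/

import Mathlib

open scoped BigOperators

/-- Euclidean 2-norm of a vector in `Fin m → ℝ`. -/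
noncomputable def evNorm {m : ℕ} (x : Fin m → ℝ) : ℝ :=
  Real.sqrt (∑ i, x i ^ 2)

/-- Euclidean inner product of vectors in `Fin m → ℝ`. -/
noncomputable def evInner {m : ℕ} (x y : Fin m → ℝ) : ℝ :=
  ∑ i, x i * y i

/-- `[X]_g`: the maximum Euclidean 2-norm among the columns of `X`. -/
noncomputable def gMax {m n : ℕ} (X : Matrix (Fin m) (Fin n) ℝ) : ℝ :=
  ⨆ j : Fin n, evNorm (fun i => X i j)

/-- `‖X‖_g = √n · [X]_g` where `n` is the number of columns of `X`. -/
noncomputable def gNorm {m n : ℕ} (X : Matrix (Fin m) (Fin n) ℝ) : ℝ :=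
  Real.sqrt n * gMax X

/-- Spectral norm (largest singular value): supremum of `‖Xv‖₂` over unit vectors `v`. -/
noncomputable def matSpectralNorm {m n : ℕ} (X : Matrix (Fin m) (Fin n) ℝ) : ℝ :=
  ⨆ v : {v : Fin n → ℝ // evNorm v = 1}, evNorm (X.mulVec v.1)

/-- Smallest singular value: infimum of `‖Xv‖₂` over unit vectors `v`. -/
noncomputable def sigmaMin {m n : ℕ} (X : Matrix (Fin m) (Fin n) ℝ) : ℝ :=
  ⨅ v : {v : Fin n → ℝ // evNorm v = 1}, evNorm (X.mulVec v.1)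

/-- Frobenius norm of a real matrix. -/
noncomputable def frobeniusNorm {m n : ℕ} (X : Matrix (Fin m) (Fin n) ℝ) : ℝ :=
  Real.sqrt (∑ i, ∑ j, X i j ^ 2)

/-- `Ω` is an `ε`-subspace embedding for the subspace `K ⊆ ℝ^m`. -/
def IsSubspaceEmbedding {s m : ℕ} (ε : ℝ) (Ω : Matrix (Fin s) (Fin m) ℝ)
    (K : Submodule ℝ (Fin m → ℝ)) : Prop :=
  ∀ x ∈ K, ∀ y ∈ K,
    |evInner x y - evInner (Ω.mulVec x) (Ω.mulVec y)| ≤ ε * evNorm x * evNorm y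

/-- Column space of a matrix: the span of its columns. -/
noncomputable def colSpace {m n : ℕ} (X : Matrix (Fin m) (Fin n) ℝ) :
    Submodule ℝ (Fin m → ℝ) :=
  Submodule.span ℝ (Set.range fun j : Fin n => fun i => X i j)

/-!
For `x` in the subspace, the embedding inequality at `y = x` reads
`(1 - ε)‖x‖² ≤ ‖Ωx‖² ≤ (1 + ε)‖x‖²`, so one sketch changes the spectral norm by a factor in
`[√(1 - ε), √(1 + ε)]`. Two sketches multiply these factors, and `1 - ε_s = (1 - ε₁)(1 - ε₂)`,
`1 + ε_b = (1 + ε₁)(1 + ε₂)`.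
-/

section EuclideanNorm

variable {m : ℕ}

theorem evNorm_eq_norm_toLp (x : Fin m → ℝ) : evNorm x = ‖WithLp.toLp 2 x‖ := by
  simp only [evNorm, EuclideanSpace.norm_eq, Real.norm_eq_abs, sq_abs]

theorem evNorm_nonneg (x : Fin m → ℝ) : 0 ≤ evNorm x :=
  Real.sqrt_nonneg _

theorem evNorm_smul (c : ℝ) (x : Fin m → ℝ) : evNorm (c • x) = |c| * evNorm x := by
  simp only [evNorm_eq_norm_toLp, WithLp.toLp_smul, norm_smul, Real.norm_eq_abs]

theorem evInner_self (x : Fin m → ℝ) : evInner x x = evNorm x ^ 2 := by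
  rw [evNorm, Real.sq_sqrt (Finset.sum_nonneg fun i _ => sq_nonneg (x i))]
  simp only [evInner, sq]

theorem sqrt_mul_sq_evNorm (c : ℝ) (x : Fin m → ℝ) : √(c * evNorm x ^ 2) = √c * evNorm x := by
  rw [Real.sqrt_mul' c (sq_nonneg _), Real.sqrt_sq (evNorm_nonneg x)]

end EuclideanNorm

theorem mulVec_mem_colSpace {m n : ℕ} (X : Matrix (Fin m) (Fin n) ℝ) (v : Fin n → ℝ) :
    X.mulVec v ∈ colSpace X :=
  X.range_mulVecLin.le ⟨v, rfl⟩

section SpectralNorm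

variable {k m n : ℕ}

open scoped Matrix.Norms.L2Operator in
theorem bddAbove_range_evNorm_mulVec (X : Matrix (Fin m) (Fin n) ℝ) :
    BddAbove (Set.range fun v : {v : Fin n → ℝ // evNorm v = 1} => evNorm (X.mulVec v.1)) := by
  refine ⟨‖X‖, ?_⟩
  rintro _ ⟨⟨v, hv⟩, rfl⟩
  calc
    evNorm (X.mulVec v) ≤ ‖X‖ * evNorm v := by
      rw [evNorm_eq_norm_toLp, evNorm_eq_norm_toLp]
      exact X.l2_opNorm_mulVec (WithLp.toLp 2 v)
    _ = ‖X‖ := by rw [hv, mul_one]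

theorem matSpectralNorm_smul (c : ℝ) (X : Matrix (Fin m) (Fin n) ℝ) :
    matSpectralNorm (c • X) = |c| * matSpectralNorm X := by
  simp only [matSpectralNorm, Matrix.smul_mulVec, evNorm_smul,
    Real.mul_iSup_of_nonneg (abs_nonneg c)]

theorem matSpectralNorm_mono {X : Matrix (Fin k) (Fin n) ℝ} {Y : Matrix (Fin m) (Fin n) ℝ}
    (h : ∀ v, evNorm (X.mulVec v) ≤ evNorm (Y.mulVec v)) :
    matSpectralNorm X ≤ matSpectralNorm Y :=
  ciSup_mono (bddAbove_range_evNorm_mulVec Y) fun v => h v.1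

end SpectralNorm

namespace IsSubspaceEmbedding

section Vector

variable {s m : ℕ} {ε : ℝ} {Ω : Matrix (Fin s) (Fin m) ℝ} {K : Submodule ℝ (Fin m → ℝ)}
  {x : Fin m → ℝ}

theorem abs_sq_evNorm_sub_sq_evNorm_mulVec_le (hΩ : IsSubspaceEmbedding ε Ω K) (hx : x ∈ K) :
    |evNorm x ^ 2 - evNorm (Ω.mulVec x) ^ 2| ≤ ε * evNorm x ^ 2 := by
  simpa only [evInner_self, mul_assoc, ← sq] using hΩ x hx x hx

theorem sqrt_one_sub_mul_evNorm_le (hΩ : IsSubspaceEmbedding ε Ω K) (hx : x ∈ K) :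
    √(1 - ε) * evNorm x ≤ evNorm (Ω.mulVec x) := by
  rw [← sqrt_mul_sq_evNorm, Real.sqrt_le_left (evNorm_nonneg _)]
  linarith [(abs_le.mp (hΩ.abs_sq_evNorm_sub_sq_evNorm_mulVec_le hx)).2]

theorem evNorm_mulVec_le (hΩ : IsSubspaceEmbedding ε Ω K) (hx : x ∈ K) :
    evNorm (Ω.mulVec x) ≤ √(1 + ε) * evNorm x := by
  rw [← sqrt_mul_sq_evNorm]
  apply Real.le_sqrt_of_sq_le
  linarith [(abs_le.mp (hΩ.abs_sq_evNorm_sub_sq_evNorm_mulVec_le hx)).1]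

end Vector

section Matrix

variable {s m n : ℕ} {ε : ℝ} {Ω : Matrix (Fin s) (Fin m) ℝ} {X : Matrix (Fin m) (Fin n) ℝ}

theorem sqrt_one_sub_mul_matSpectralNorm_le (hΩ : IsSubspaceEmbedding ε Ω (colSpace X)) :
    √(1 - ε) * matSpectralNorm X ≤ matSpectralNorm (Ω * X) := by
  rw [← abs_of_nonneg (Real.sqrt_nonneg (1 - ε)), ← matSpectralNorm_smul]
  refine matSpectralNorm_mono fun v => ?_
  rw [Matrix.smul_mulVec, evNorm_smul, abs_of_nonneg (Real.sqrt_nonneg _), ← Matrix.mulVec_mulVec]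
  exact hΩ.sqrt_one_sub_mul_evNorm_le (mulVec_mem_colSpace X v)

theorem matSpectralNorm_mul_le (hΩ : IsSubspaceEmbedding ε Ω (colSpace X)) :
    matSpectralNorm (Ω * X) ≤ √(1 + ε) * matSpectralNorm X := by
  rw [← abs_of_nonneg (Real.sqrt_nonneg (1 + ε)), ← matSpectralNorm_smul]
  refine matSpectralNorm_mono fun v => ?_
  rw [Matrix.smul_mulVec, evNorm_smul, abs_of_nonneg (Real.sqrt_nonneg _), ← Matrix.mulVec_mulVec]
  exact hΩ.evNorm_mulVec_le (mulVec_mem_colSpace X v)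

end Matrix

end IsSubspaceEmbedding

theorem multiSketch_spectralNorm_bounds_general {s₁ s₂ m n : ℕ} {ε₁ ε₂ : ℝ}
    (X : Matrix (Fin m) (Fin n) ℝ)
    (Ω₁ : Matrix (Fin s₁) (Fin m) ℝ) (Ω₂ : Matrix (Fin s₂) (Fin s₁) ℝ)
    (hΩ₁ : IsSubspaceEmbedding ε₁ Ω₁ (colSpace X))
    (hΩ₂ : IsSubspaceEmbedding ε₂ Ω₂ (colSpace (Ω₁ * X))) :
    √(1 - ε₁) * √(1 - ε₂) * matSpectralNorm X ≤ matSpectralNorm (Ω₂ * Ω₁ * X) ∧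
      matSpectralNorm (Ω₂ * Ω₁ * X) ≤ √(1 + ε₁) * √(1 + ε₂) * matSpectralNorm X := by
  rw [Matrix.mul_assoc Ω₂]
  constructor
  · calc
      √(1 - ε₁) * √(1 - ε₂) * matSpectralNorm X
          = √(1 - ε₂) * (√(1 - ε₁) * matSpectralNorm X) := by ring
      _ ≤ √(1 - ε₂) * matSpectralNorm (Ω₁ * X) := by
        gcongr
        exact hΩ₁.sqrt_one_sub_mul_matSpectralNorm_le
      _ ≤ matSpectralNorm (Ω₂ * (Ω₁ * X)) := hΩ₂.sqrt_one_sub_mul_matSpectralNorm_le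
  · calc
      matSpectralNorm (Ω₂ * (Ω₁ * X))
          ≤ √(1 + ε₂) * matSpectralNorm (Ω₁ * X) := hΩ₂.matSpectralNorm_mul_le
      _ ≤ √(1 + ε₂) * (√(1 + ε₁) * matSpectralNorm X) := by
        gcongr
        exact hΩ₁.matSpectralNorm_mul_le
      _ = √(1 + ε₁) * √(1 + ε₂) * matSpectralNorm X := by ring

/-- Multi-sketching, spectral norm: `√(1−ε_s)·‖X‖₂ ≤ ‖Ω₂Ω₁X‖₂ ≤ √(1+ε_b)·‖X‖₂`. -/
theorem multiSketch_spectralNorm_bounds {s₁ s₂ m n : ℕ} {ε₁ ε₂ : ℝ}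
    (hε₁0 : 0 ≤ ε₁) (hε₁1 : ε₁ < 1) (hε₂0 : 0 ≤ ε₂) (hε₂1 : ε₂ < 1)
    (X : Matrix (Fin m) (Fin n) ℝ)
    (Ω₁ : Matrix (Fin s₁) (Fin m) ℝ) (Ω₂ : Matrix (Fin s₂) (Fin s₁) ℝ)
    (hΩ₁ : IsSubspaceEmbedding ε₁ Ω₁ (colSpace X))
    (hΩ₂ : IsSubspaceEmbedding ε₂ Ω₂ (colSpace (Ω₁ * X))) :
    Real.sqrt (1 - (ε₁ + ε₂ - ε₁ * ε₂)) * matSpectralNorm X ≤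
        matSpectralNorm (Ω₂ * Ω₁ * X) ∧
      matSpectralNorm (Ω₂ * Ω₁ * X) ≤
        Real.sqrt (1 + (ε₁ + ε₂ + ε₁ * ε₂)) * matSpectralNorm X := by
  rw [show 1 - (ε₁ + ε₂ - ε₁ * ε₂) = (1 - ε₁) * (1 - ε₂) by ring,
    show 1 + (ε₁ + ε₂ + ε₁ * ε₂) = (1 + ε₁) * (1 + ε₂) by ring,
    Real.sqrt_mul (sub_nonneg.mpr hε₁1.le), Real.sqrt_mul (by positivity)]
  exact multiSketch_spectralNorm_bounds_general X Ω₁ Ω₂ hΩ₁ hΩ₂
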